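/- Let Ω ⊂ ℝ² be a bounded Lipschitz x₁-connected domain. Let u ∈ BV(Ω;ℝ²) be of the form u(x) = R(x₂)x + ψ(x₂) for a.e. x ∈ Ω, with R ∈ BV(a_Ω,b_Ω;SO(2)) and ψ ∈ BV(a_Ω,b_Ω;ℝ²). Then there exists a sequence (u_ε)_ε ⊂ W^{1,1}(Ω;ℝ²) with ∇u_ε(x) ∈ SO(2) for a.e. x ∈ εY_rig ∩ Ω for every ε, such that u_ε converges weakly* to u in BV(Ω;ℝ²). -/

import Mathlib

open MeasureTheory Set Filter Topology
open scoped ENNReal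

noncomputable section

/-- We identify `ℝ²` with maps `Fin 2 → ℝ`; `x 0` is the `x₁` coordinate and
`x 1` the `x₂` coordinate. -/
abbrev V2 := Fin 2 → ℝ

/-- `2 × 2` real matrices. -/
abbrev Mat2 := Matrix (Fin 2) (Fin 2) ℝ

/-- Proper rotations: `SO(2) = {R : R Rᵀ = 1, det R = 1}`. -/
def SO2 : Set Mat2 := {R | R * R.transpose = 1 ∧ R.det = 1}

def e1 : V2 := ![1, 0]
def e2 : V2 := ![0, 1]

/-- Euclidean norm on `ℝ²`. -/
def vnorm (v : V2) : ℝ := Real.sqrt (v 0 ^ 2 + v 1 ^ 2)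

/-- Frobenius norm on `2 × 2` matrices. -/
def mnorm (M : Mat2) : ℝ := Real.sqrt (∑ i, ∑ j, M i j ^ 2)

/-- Euclidean inner product on `ℝ²`. -/
def dot (v w : V2) : ℝ := ∑ i, v i * w i

/-- Tensor (outer) product `a ⊗ b = a bᵀ` of two vectors. -/
def outer (a b : V2) : Mat2 := Matrix.of fun i j => a i * b j

/-- Identification of `ℝ²` with the Euclidean space `EuclideanSpace ℝ (Fin 2)`. -/
def vToE (v : V2) : EuclideanSpace ℝ (Fin 2) := (EuclideanSpace.equiv (Fin 2) ℝ).symm v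

/-- Identification of `2×2` matrices with `EuclideanSpace ℝ (Fin 2 × Fin 2)`
(so that the induced norm is the Frobenius norm). -/
def mToE (M : Mat2) : EuclideanSpace ℝ (Fin 2 × Fin 2) :=
  (EuclideanSpace.equiv (Fin 2 × Fin 2) ℝ).symm fun p => M p.1 p.2

/-- A vector-valued function of one real variable has bounded variation on `s`
(with respect to the Euclidean norm). -/
def BVv (ψ : ℝ → V2) (s : Set ℝ) : Prop := BoundedVariationOn (fun t => vToE (ψ t)) s

/-- A matrix-valued function of one real variable has bounded variation on `s`
(with respect to the Frobenius norm). -/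
def BVm (R : ℝ → Mat2) (s : Set ℝ) : Prop := BoundedVariationOn (fun t => mToE (R t)) s

/-- Componentwise (a.e. pointwise) derivative of a vector-valued function of one variable.
For a one-dimensional `BV` function, the classical derivative exists a.e. and coincides with
the density of the absolutely continuous part of its distributional derivative
(the approximate derivative). -/
def vecDeriv (ψ : ℝ → V2) (t : ℝ) : V2 := fun i => deriv (fun s => ψ s i) t

/-- Componentwise derivative of a matrix-valued function of one variable. -/
def mDeriv (R : ℝ → Mat2) (t : ℝ) : Mat2 := Matrix.of fun i j => deriv (fun s => R s i j) t

/-- The rigid layers `ε Y_rig = {x : Int.fract (x₂/ε) ∈ [λ, 1)}` (1-periodic extension of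
`[0,1) × [λ,1)`, scaled by `ε`). -/
def rigid2 (lam ε : ℝ) : Set V2 := {x | lam ≤ Int.fract (x 1 / ε)}

/-- The one-dimensional rigid layers `ε I_rig`, where `I_rig` is the 1-periodic extension
of `[λ, 1)`. -/
def rigid1 (lam ε : ℝ) : Set ℝ := {t | lam ≤ Int.fract (t / ε)}

/-- `a_Ω = inf_{x ∈ Ω} x₂`. -/
def aOm (Ω : Set V2) : ℝ := sInf ((fun x : V2 => x 1) '' Ω)

/-- `b_Ω = sup_{x ∈ Ω} x₂`. -/
def bOm (Ω : Set V2) : ℝ := sSup ((fun x : V2 => x 1) '' Ω)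

/-- `Ω` is `x₁`-connected: every horizontal slice is a (possibly empty) interval. -/
def X1Connected (Ω : Set V2) : Prop := ∀ t : ℝ, OrdConnected {s : ℝ | ![s, t] ∈ Ω}

/-- A (nonempty) bounded Lipschitz domain: near every boundary point, after a rotation,
`Ω` is the region above the graph of a Lipschitz function. -/
def IsLipschitzDomain (Ω : Set V2) : Prop :=
  IsOpen Ω ∧ Ω.Nonempty ∧ Bornology.IsBounded Ω ∧
    ∀ x ∈ frontier Ω, ∃ Q ∈ SO2, ∃ L : NNReal, ∃ f : ℝ → ℝ, ∃ r : ℝ, 0 < r ∧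
      LipschitzWith L f ∧ ∀ y ∈ Metric.ball x r, (y ∈ Ω ↔ f (Q.mulVec y 0) < Q.mulVec y 1)

/-- Partial derivative `∂_j φ` of a scalar test function. -/
def pd (j : Fin 2) (φ : V2 → ℝ) (x : V2) : ℝ := fderiv ℝ φ x (Pi.single j 1)

/-- Componentwise integrability of a matrix-valued map. -/
def IntegrableOnM (g : V2 → Mat2) (Ω : Set V2) : Prop :=
  ∀ i j, IntegrableOn (fun x => g x i j) Ω volume

/-- `u ∈ W^{1,1}(Ω;ℝ²)` with weak gradient `gu`, expressed through integration by parts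
against smooth compactly supported test functions. -/
structure IsSobolev11On (Ω : Set V2) (u : V2 → V2) (gu : V2 → Mat2) : Prop where
  int_u : IntegrableOn u Ω volume
  int_gu : IntegrableOnM gu Ω
  ibp : ∀ φ : V2 → ℝ, ContDiff ℝ (⊤ : ℕ∞) φ → HasCompactSupport φ → tsupport φ ⊆ Ω →
    ∀ i j, ∫ x in Ω, u x i * pd j φ x = - ∫ x in Ω, φ x * gu x i j

/-- `u ∈ BV(Ω;ℝ²)`, with distributional derivative `Du = gu · L² + gs · σ`.
Here `gu` is the approximate differential (density of the absolutely continuous part),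
`σ = |D^s u|` is the total variation measure of the singular part (a finite measure,
concentrated on `Ω` and singular with respect to Lebesgue measure), and `gs` is the
polar density of the singular part, of unit Frobenius norm `σ`-a.e. -/
structure HasBVDerivOn (Ω : Set V2) (u : V2 → V2) (gu : V2 → Mat2)
    (σ : Measure V2) (gs : V2 → Mat2) : Prop where
  int_u : IntegrableOn u Ω volume
  int_gu : IntegrableOnM gu Ω
  fin : σ Set.univ ≠ ⊤
  conc : σ Ωᶜ = 0
  perp : σ ⟂ₘ (volume : Measure V2)
  meas_gs : ∀ i j, AEMeasurable (fun x => gs x i j) σ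
  unit : ∀ᵐ x ∂σ, mnorm (gs x) = 1
  ibp : ∀ φ : V2 → ℝ, ContDiff ℝ (⊤ : ℕ∞) φ → HasCompactSupport φ → tsupport φ ⊆ Ω →
    ∀ i j, ∫ x in Ω, u x i * pd j φ x
        = (- ∫ x in Ω, φ x * gu x i j) - ∫ x, φ x * gs x i j ∂σ

/-- `L¹(Ω;ℝ²)` convergence of a sequence. -/
def L1ConvOn (Ω : Set V2) (un : ℕ → V2 → V2) (u : V2 → V2) : Prop :=
  Tendsto (fun n => ∫ x in Ω, vnorm (un n x - u x)) atTop (𝓝 0)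

/-- Weak* convergence of the measures `gn n · L²∟Ω` to `gu · L²∟Ω + gs · σ`
in `M(Ω; ℝ^{2×2})`, tested against continuous functions compactly supported in `Ω`. -/
def MeasConv (Ω : Set V2) (gn : ℕ → V2 → Mat2) (gu : V2 → Mat2)
    (σ : Measure V2) (gs : V2 → Mat2) : Prop :=
  ∀ φ : V2 → ℝ, Continuous φ → HasCompactSupport φ → tsupport φ ⊆ Ω → ∀ i j,
    Tendsto (fun n => ∫ x in Ω, φ x * gn n x i j) atTop
      (𝓝 ((∫ x in Ω, φ x * gu x i j) + ∫ x, φ x * gs x i j ∂σ))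

/-- Weak* convergence in `BV(Ω;ℝ²)` of a sequence of `W^{1,1}` maps to a `BV` limit:
`L¹` convergence together with weak* convergence of the derivative measures. -/
def WeakStarToBV (Ω : Set V2) (un : ℕ → V2 → V2) (u : V2 → V2) : Prop :=
  ∃ gu σ gs, HasBVDerivOn Ω u gu σ gs ∧ L1ConvOn Ω un u ∧
    ∀ gn : ℕ → V2 → Mat2, (∀ n, IsSobolev11On Ω (un n) (gn n)) → MeasConv Ω gn gu σ gs

/-- `u ∈ A_ε`, witnessed by the data `R ∈ L^∞(Ω;SO(2))` and `γ ∈ L¹(Ω)`: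
`u ∈ W^{1,1}(Ω;ℝ²)` with `∇u = R (I + γ e₁⊗e₂)` a.e. and `γ = 0` a.e. on `εY_rig ∩ Ω`. -/
structure MemAeps (Ω : Set V2) (lam ε : ℝ) (u : V2 → V2)
    (R : V2 → Mat2) (γ : V2 → ℝ) : Prop where
  so2 : ∀ᵐ x ∂(volume.restrict Ω), R x ∈ SO2
  int_γ : IntegrableOn γ Ω volume
  sob : IsSobolev11On Ω u fun x => R x * (1 + γ x • outer e1 e2)
  rig : ∀ᵐ x ∂(volume.restrict (Ω ∩ rigid2 lam ε)), γ x = 0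

/-- The elastoplastic energy `E_ε(u) = ∫_Ω |γ| dx` for `u ∈ A_ε`, `∞` otherwise,
as an `ℝ≥0∞`-valued functional (the decomposition data is essentially unique). -/
def Eeps (Ω : Set V2) (lam ε : ℝ) (u : V2 → V2) : ℝ≥0∞ :=
  sInf {c | ∃ R γ, MemAeps Ω lam ε u R γ ∧ c = ∫⁻ x in Ω, ENNReal.ofReal |γ x|}

/-- `u ∈ A` relative to the vertical interval `(a, b)`:
`u ∈ BV(Ω;ℝ²)` with `u(x) = R(x₂)x + ψ(x₂)` a.e., `R ∈ BV(a,b;SO(2))`,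
`ψ ∈ BV(a,b;ℝ²)` and `det ∇u = 1` a.e. in `Ω`. -/
def memAOn (Ω : Set V2) (a b : ℝ) (u : V2 → V2) : Prop :=
  ∃ gu σ gs, HasBVDerivOn Ω u gu σ gs ∧
    (∃ R : ℝ → Mat2, ∃ ψ : ℝ → V2, (∀ t ∈ Ioo a b, R t ∈ SO2) ∧
      BVm R (Ioo a b) ∧ BVv ψ (Ioo a b) ∧
      ∀ᵐ x ∂(volume.restrict Ω), u x = (R (x 1)).mulVec x + ψ (x 1)) ∧
    ∀ᵐ x ∂(volume.restrict Ω), (gu x).det = 1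

/-- `u ∈ A`. -/
def memA (Ω : Set V2) (u : V2 → V2) : Prop := memAOn Ω (aOm Ω) (bOm Ω) u

/-- `u ∈ A∥` relative to the vertical interval `(a,b)`:
`u(x) = Rx + ϑ(x₂) R e₁ + c` a.e. with a constant rotation `R ∈ SO(2)`,
`ϑ ∈ BV(a,b)` and `c ∈ ℝ²`. -/
def memAparOn (Ω : Set V2) (a b : ℝ) (u : V2 → V2) : Prop :=
  ∃ R ∈ SO2, ∃ ϑ : ℝ → ℝ, ∃ c : V2, BoundedVariationOn ϑ (Ioo a b) ∧
    ∀ᵐ x ∂(volume.restrict Ω), u x = R.mulVec x + ϑ (x 1) • R.mulVec e1 + c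

/-- `u ∈ A∥`. -/
def memApar (Ω : Set V2) (u : V2 → V2) : Prop := memAparOn Ω (aOm Ω) (bOm Ω) u

/-- The limit energy `E(u) = ∫_Ω |ψ'·Re₁| dx + |D^s u|(Ω)` for `u ∈ A`, `∞` otherwise. -/
def Efun (Ω : Set V2) (u : V2 → V2) : ℝ≥0∞ :=
  sInf {c | ∃ gu σ gs, HasBVDerivOn Ω u gu σ gs ∧
    ∃ R : ℝ → Mat2, ∃ ψ : ℝ → V2,
      (∀ t ∈ Ioo (aOm Ω) (bOm Ω), R t ∈ SO2) ∧ BVm R (Ioo (aOm Ω) (bOm Ω)) ∧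
      BVv ψ (Ioo (aOm Ω) (bOm Ω)) ∧
      (∀ᵐ x ∂(volume.restrict Ω), u x = (R (x 1)).mulVec x + ψ (x 1)) ∧
      (∀ᵐ x ∂(volume.restrict Ω), (gu x).det = 1) ∧
      c = (∫⁻ x in Ω, ENNReal.ofReal |dot (vecDeriv ψ (x 1)) ((R (x 1)).mulVec e1)|)
          + σ Set.univ}

/-- The limit energy on `A∥`: `E(u) = ∫_Ω |ϑ'(x₂)| dx + |D^s u|(Ω)` for `u ∈ A∥`,
`∞` otherwise. -/
def EparFun (Ω : Set V2) (u : V2 → V2) : ℝ≥0∞ :=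
  sInf {c | ∃ gu σ gs, HasBVDerivOn Ω u gu σ gs ∧
    ∃ R ∈ SO2, ∃ ϑ : ℝ → ℝ, ∃ c0 : V2, BoundedVariationOn ϑ (Ioo (aOm Ω) (bOm Ω)) ∧
      (∀ᵐ x ∂(volume.restrict Ω), u x = R.mulVec x + ϑ (x 1) • R.mulVec e1 + c0) ∧
      c = (∫⁻ x in Ω, ENNReal.ofReal |deriv ϑ (x 1)|) + σ Set.univ}

/-- The regularized limit energy `E^δ(u) = ∫_Ω |ϑ'| dx + |D^s u|(Ω) + δ|Ω|` on `A∥`,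
`∞` otherwise. -/
def EDelta (Ω : Set V2) (δ : ℝ) (u : V2 → V2) : ℝ≥0∞ :=
  EparFun Ω u + ENNReal.ofReal δ * volume Ω

/-- `‖v‖_{W^{1,p}(Ω;ℝ²)}^p = ∫_Ω |v|^p + ∫_Ω |Dv|^p` for a map `v` with weak Jacobian `G`. -/
def Wp1 (p : ℝ) (Ω : Set V2) (v : V2 → V2) (G : V2 → Mat2) : ℝ≥0∞ :=
  (∫⁻ x in Ω, ENNReal.ofReal (vnorm (v x) ^ p)) + ∫⁻ x in Ω, ENNReal.ofReal (mnorm (G x) ^ p)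

/-- The regularized energy
`E^δ_ε(u) = ∫_Ω |γ| dx + δ ‖∂₁ u‖_{W^{1,p}(Ω;ℝ²)}^p` for `u ∈ A_ε` with
`∂₁u = R e₁ ∈ W^{1,p}(Ω;ℝ²)`, and `∞` otherwise. -/
def EepsDelta (Ω : Set V2) (lam ε δ p : ℝ) (u : V2 → V2) : ℝ≥0∞ :=
  sInf {c | ∃ R γ, MemAeps Ω lam ε u R γ ∧
    ∃ G : V2 → Mat2, IsSobolev11On Ω (fun x => (R x).mulVec e1) G ∧
      c = (∫⁻ x in Ω, ENNReal.ofReal |γ x|) +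
          ENNReal.ofReal δ * Wp1 p Ω (fun x => (R x).mulVec e1) G}

/-- `x` is an approximate jump point of `u`, with one-sided approximate limits `a ≠ b`
relative to a unit normal `ν`. -/
def JumpPt (u : V2 → V2) (x : V2) : Prop :=
  ∃ a b ν : V2, a ≠ b ∧ vnorm ν = 1 ∧
    Tendsto (fun r : ℝ =>
        (∫⁻ z in {z | z ∈ Metric.ball x r ∧ 0 < dot (z - x) ν},
            ENNReal.ofReal (vnorm (u z - a))) / volume (Metric.ball x r))
      (𝓝[>] 0) (𝓝 0) ∧
    Tendsto (fun r : ℝ =>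
        (∫⁻ z in {z | z ∈ Metric.ball x r ∧ dot (z - x) ν < 0},
            ENNReal.ofReal (vnorm (u z - b))) / volume (Metric.ball x r))
      (𝓝[>] 0) (𝓝 0)

/-- The jump set `J_u` of `u` in `Ω`. -/
def jumpSet (Ω : Set V2) (u : V2 → V2) : Set V2 := {x ∈ Ω | JumpPt u x}

/-- `u ∈ SBV_∞(Ω;ℝ²)`: `u ∈ BV` with singular part concentrated on the jump set
(no Cantor part), `∇u ∈ L^∞(Ω;ℝ^{2×2})` and `H¹(J_u) < ∞`. -/
def memSBVinf (Ω : Set V2) (u : V2 → V2) : Prop :=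
  ∃ gu σ gs, HasBVDerivOn Ω u gu σ gs ∧
    σ {x | ¬ JumpPt u x} = 0 ∧
    (∃ M : ℝ, ∀ᵐ x ∂(volume.restrict Ω), mnorm (gu x) ≤ M) ∧
    Measure.hausdorffMeasure (1 : ℝ) (jumpSet Ω u) ≠ ⊤

/-- Piecewise constant functions on `(a,b)` with finitely many jumps
(the class `PC(a,b)`). -/
def PCOn {α : Type*} (a b : ℝ) (f : ℝ → α) : Prop :=
  ∃ S : Finset ℝ, ∀ s₁ ∈ Ioo a b, ∀ s₂ ∈ Ioo a b, s₁ ≤ s₂ →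
    (∀ r ∈ S, r ∉ Icc s₁ s₂) → f s₁ = f s₂

/-- Piecewise Lipschitz functions on `(a,b)` with finitely many jump points:
the class `SBV_∞(a,b;ℝ²)` of one-dimensional special functions of bounded variation
with bounded derivative and finitely many jumps. -/
def PLipOn (a b : ℝ) (f : ℝ → V2) : Prop :=
  ∃ S : Finset ℝ, ∃ L : ℝ, 0 ≤ L ∧ ∀ s₁ ∈ Ioo a b, ∀ s₂ ∈ Ioo a b, s₁ ≤ s₂ →
    (∀ r ∈ S, r ∉ Icc s₁ s₂) → vnorm (f s₂ - f s₁) ≤ L * (s₂ - s₁)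

/-- The rectangle `Ω = (0,1) × (−1,1)`. -/
def Rect : Set V2 := {x | x 0 ∈ Ioo (0:ℝ) 1 ∧ x 1 ∈ Ioo (-1:ℝ) 1}

/-- `f ∈ W^{1,1}(a,b)`: `f` has an integrable weak derivative on `(a,b)`
(absolutely continuous representative). -/
def IsW11On (f : ℝ → ℝ) (a b : ℝ) : Prop :=
  ∃ g : ℝ → ℝ, IntegrableOn g (Ioo a b) volume ∧
    ∀ s ∈ Ioo a b, ∀ t ∈ Ioo a b, f t - f s = ∫ r in s..t, g r

/-!
On the layers of height `ε` replace `R` and `ψ` by piecewise affine interpolants: across the soft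
part of each layer they run between two values of `R`, `ψ` at nodes of spacing about `ε`, and on the
rigid part they are frozen. There the map `x ↦ Rₑ(x₂) x + ψₑ(x₂)` has gradient equal to a value
of `R`, a rotation. In the soft part the interpolation leaves `SO(2)`, which is allowed; since its
total variation is at most that of `R` and `ψ`, the gradients stay bounded in `L¹`. One-dimensional
`BV` functions are continuous almost everywhere, so the maps converge pointwise almost everywhere
and, by dominated convergence, in `L¹`. Integration by parts then identifies the limit of the
gradients on smooth test functions, and the `L¹` bound extends this to all continuous ones.
-/

section OneDimensional

variable {E : Type*} [NormedAddCommGroup E] [NormedSpace ℝ E]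

theorem lipschitzWith_of_forall_lipschitzOnWith_Icc_int {X : Type*} [PseudoMetricSpace X]
    {f : ℝ → X} {C : NNReal} (h : ∀ k : ℤ, LipschitzOnWith C f (Icc (k : ℝ) (k + 1))) :
    LipschitzWith C f := by
  have cell {k : ℤ} {x y : ℝ} (hx : x ∈ Icc (k : ℝ) (k + 1)) (hy : y ∈ Icc (k : ℝ) (k + 1))
      (hxy : x ≤ y) : dist (f x) (f y) ≤ C * (y - x) := by
    simpa [Real.dist_eq, abs_sub_comm x y, abs_of_nonneg (sub_nonneg.2 hxy)]
      using (h k).dist_le_mul x hx y hy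
  have nodes {k m : ℤ} (hkm : k ≤ m) : dist (f k) (f m) ≤ C * ((m : ℝ) - k) := by
    induction m, hkm using Int.leInduction with
    | base => simp
    | succ m _ ih =>
      have := cell (k := m) (left_mem_Icc.2 (by simp)) (right_mem_Icc.2 (by simp)) (by simp)
      push_cast
      linarith [dist_triangle (f k) (f m) (f (m + 1))]
  have ordered {x y : ℝ} (hxy : x ≤ y) : dist (f x) (f y) ≤ C * (y - x) := by
    have hx : x ∈ Icc (⌊x⌋ : ℝ) (⌊x⌋ + 1) := ⟨Int.floor_le x, (Int.lt_floor_add_one x).le⟩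
    have hy : y ∈ Icc (⌊y⌋ : ℝ) (⌊y⌋ + 1) := ⟨Int.floor_le y, (Int.lt_floor_add_one y).le⟩
    rcases (Int.floor_mono hxy).eq_or_lt with hfl | hfl
    · exact cell hx (hfl ▸ hy) hxy
    · have hnodes := nodes (Int.add_one_le_of_lt hfl)
      push_cast at hnodes
      calc dist (f x) (f y)
          ≤ dist (f x) (f (⌊x⌋ + 1)) + dist (f (⌊x⌋ + 1)) (f ⌊y⌋) + dist (f ⌊y⌋) (f y) :=
            dist_triangle4 _ _ _ _
        _ ≤ C * (⌊x⌋ + 1 - x) + C * (⌊y⌋ - (⌊x⌋ + 1)) + C * (y - ⌊y⌋) := by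
            gcongr
            · exact cell hx (right_mem_Icc.2 (by simp)) hx.2
            · exact cell (left_mem_Icc.2 (by simp)) hy hy.1
        _ = C * (y - x) := by ring
  refine LipschitzWith.of_dist_le_mul fun x y => ?_
  rcases le_total x y with hxy | hxy
  · rw [Real.dist_eq, abs_sub_comm, abs_of_nonneg (sub_nonneg.2 hxy)]
    exact ordered hxy
  · rw [Real.dist_eq, abs_of_nonneg (sub_nonneg.2 hxy), dist_comm]
    exact ordered hxy

theorem norm_deriv_le_of_hasDerivWithinAt_Ici {f : ℝ → E} {f' : E} {x : ℝ}
    (h : HasDerivWithinAt f f' (Ici x) x) : ‖deriv f x‖ ≤ ‖f'‖ := by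
  by_cases hf : DifferentiableAt ℝ f x
  · rw [(uniqueDiffWithinAt_Ici x).eq_deriv _ hf.hasDerivAt.hasDerivWithinAt h]
  · simp [deriv_zero_of_not_differentiableAt hf]

theorem lintegral_enorm_deriv_comp_mul_left (f : ℝ → E) {c : ℝ} (hc : c ≠ 0) :
    ∫⁻ t, ‖deriv (fun s => f (c * s)) t‖ₑ = ∫⁻ t, ‖deriv f t‖ₑ := by
  have hmul : MeasurableEmbedding (c * ·) := (Homeomorph.mulLeft₀ c hc).measurableEmbedding
  calc ∫⁻ t, ‖deriv (fun s => f (c * s)) t‖ₑ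
      = ‖c‖ₑ * ∫⁻ t, ‖deriv f (c * t)‖ₑ := by
        simp only [deriv_comp_mul_left c f, enorm_smul]
        exact lintegral_const_mul' _ _ enorm_ne_top
    _ = ‖c‖ₑ * ∫⁻ t, ‖deriv f t‖ₑ ∂Measure.map (c * ·) volume := by
        rw [hmul.lintegral_map]
    _ = ∫⁻ t, ‖deriv f t‖ₑ := by
        rw [Real.map_volume_mul_left hc, lintegral_smul_measure, smul_eq_mul, ← mul_assoc,
          Real.enorm_eq_ofReal_abs, ← ENNReal.ofReal_mul (abs_nonneg c), ← abs_mul,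
          mul_inv_cancel₀ hc]
        simp

theorem tsum_edist_succ_le_eVariationOn {X : Type*} [PseudoEMetricSpace X] (q : ℤ → X) :
    ∑' k, edist (q k) (q (k + 1)) ≤ eVariationOn q univ := by
  rw [ENNReal.tsum_eq_iSup_sum]
  refine iSup_le fun S => ?_
  obtain ⟨m, hm⟩ := S.bddBelow
  obtain ⟨M, hM⟩ := S.bddAbove
  let node (i : ℕ) : ℤ := m + i
  have hnode : Monotone node := fun i j hij => by simp only [node]; lia
  have hS : S ⊆ (Finset.range (M + 1 - m).toNat).image node := fun k hk => by
    have := hm hk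
    have := hM hk
    exact Finset.mem_image.2 ⟨(k - m).toNat, by simp; lia, by simp only [node]; lia⟩
  calc ∑ k ∈ S, edist (q k) (q (k + 1))
      ≤ ∑ k ∈ (Finset.range (M + 1 - m).toNat).image node, edist (q k) (q (k + 1)) :=
        Finset.sum_le_sum_of_subset hS
    _ = ∑ i ∈ Finset.range (M + 1 - m).toNat, edist (q (node (i + 1))) (q (node i)) := by
        rw [Finset.sum_image fun i _ j _ hij => by simpa [node] using hij]
        exact Finset.sum_congr rfl fun i _ => by simp [node, edist_comm, add_assoc]
    _ ≤ eVariationOn q univ := eVariationOn.sum_le hnode fun _ => mem_univ _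

/-- The ramp interpolation of a bi-infinite sequence: it goes affinely from `q k` to `q (k + 1)` on
the soft interval `[k, k + lam]` and is constant on the rigid interval `[k + lam, k + 1]`. -/
def layerInterp (lam : ℝ) (q : ℤ → E) (y : ℝ) : E :=
  AffineMap.lineMap (q ⌊y⌋) (q (⌊y⌋ + 1)) (min 1 (Int.fract y / lam))

section layerInterp

variable {lam : ℝ} {q : ℤ → E} {y : ℝ}

theorem layerInterp_of_le_fract (hlam : 0 < lam) (hy : lam ≤ Int.fract y) :
    layerInterp lam q y = q (⌊y⌋ + 1) := by
  rw [layerInterp, min_eq_left ((one_le_div hlam).2 hy), AffineMap.lineMap_apply_one]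

theorem layerInterp_mem_segment (hlam : 0 ≤ lam) (q : ℤ → E) (y : ℝ) :
    layerInterp lam q y ∈ segment ℝ (q ⌊y⌋) (q (⌊y⌋ + 1)) := by
  rw [segment_eq_image_lineMap]
  exact mem_image_of_mem _
    ⟨le_min zero_le_one (div_nonneg (Int.fract_nonneg y) hlam), min_le_left _ _⟩

theorem layerInterp_eq_lineMap (hlam : lam ∈ Ioc (0 : ℝ) 1) {k : ℤ}
    (hy : y ∈ Icc (k : ℝ) (k + 1)) :
    layerInterp lam q y = AffineMap.lineMap (q k) (q (k + 1)) (min 1 ((y - k) / lam)) := by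
  rcases hy.2.eq_or_lt with rfl | hlt
  · have : (k : ℝ) + 1 = ((k + 1 : ℤ) : ℝ) := by push_cast; rfl
    rw [layerInterp, add_sub_cancel_left, min_eq_left ((one_le_div hlam.1).2 hlam.2), this,
      Int.fract_intCast, Int.floor_intCast]
    simp
  · have hfl : ⌊y⌋ = k := Int.floor_eq_iff.2 ⟨hy.1, hlt⟩
    rw [layerInterp, Int.fract, hfl]

theorem lipschitzWith_layerInterp (hlam : lam ∈ Ioc (0 : ℝ) 1) {K : ℝ}
    (hq : ∀ k, dist (q k) (q (k + 1)) ≤ K) :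
    LipschitzWith (K / lam).toNNReal (layerInterp lam q) := by
  refine lipschitzWith_of_forall_lipschitzOnWith_Icc_int fun k =>
    LipschitzOnWith.of_dist_le' fun x hx y hy => ?_
  have hramp : dist (min 1 ((x - k) / lam)) (min 1 ((y - k) / lam)) ≤ dist x y / lam := by
    simp only [Real.dist_eq]
    calc |min 1 ((x - k) / lam) - min 1 ((y - k) / lam)|
        ≤ |(x - k) / lam - (y - k) / lam| := by
          simpa using abs_min_sub_min_le_max 1 ((x - k) / lam) 1 ((y - k) / lam)
      _ = |x - y| / lam := by
          rw [← sub_div, sub_sub_sub_cancel_right, abs_div, abs_of_pos hlam.1]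
  rw [layerInterp_eq_lineMap hlam hx, layerInterp_eq_lineMap hlam hy, dist_lineMap_lineMap]
  calc dist (min 1 ((x - k) / lam)) (min 1 ((y - k) / lam)) * dist (q k) (q (k + 1))
      ≤ dist x y / lam * K := by gcongr; exacts [div_nonneg dist_nonneg hlam.1.le, hq k]
    _ = K / lam * dist x y := by ring

theorem hasDerivWithinAt_layerInterp_soft (hy : Int.fract y < lam) :
    HasDerivWithinAt (layerInterp lam q) (lam⁻¹ • (q (⌊y⌋ + 1) - q ⌊y⌋)) (Ici y) y := by
  have hlam : 0 < lam := (Int.fract_nonneg y).trans_lt hy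
  have hline : HasDerivAt (fun t => AffineMap.lineMap (q ⌊y⌋) (q (⌊y⌋ + 1)) ((t - ⌊y⌋) / lam))
      (lam⁻¹ • (q (⌊y⌋ + 1) - q ⌊y⌋)) y := by
    have hslope : HasDerivAt (fun t : ℝ => (t - ⌊y⌋) / lam) lam⁻¹ y := by
      simpa using ((hasDerivAt_id y).sub_const (⌊y⌋ : ℝ)).div_const lam
    exact AffineMap.hasDerivAt_lineMap.scomp y hslope
  have heq : ∀ t ∈ Ico y (min (⌊y⌋ + 1) (⌊y⌋ + lam)), layerInterp lam q t =
      AffineMap.lineMap (q ⌊y⌋) (q (⌊y⌋ + 1)) ((t - ⌊y⌋) / lam) := fun t ht => by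
    have hfl : ⌊t⌋ = ⌊y⌋ := Int.floor_eq_iff.2
      ⟨(Int.floor_le y).trans ht.1, ht.2.trans_le (min_le_left _ _)⟩
    have : t < ⌊y⌋ + lam := ht.2.trans_le (min_le_right _ _)
    rw [layerInterp, Int.fract, hfl, min_eq_right ((div_le_one hlam).2 (by linarith))]
  have hlt : y < min (⌊y⌋ + 1 : ℝ) (⌊y⌋ + lam) :=
    lt_min (Int.lt_floor_add_one y) (by linarith [Int.self_sub_floor y])
  exact hline.hasDerivWithinAt.congr_of_eventuallyEq
    (eventually_of_mem (Ico_mem_nhdsGE hlt) heq) (heq y (left_mem_Ico.2 hlt))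

theorem hasDerivWithinAt_layerInterp_rigid (hlam : 0 < lam) (hy : lam ≤ Int.fract y) :
    HasDerivWithinAt (layerInterp lam q) 0 (Ici y) y := by
  have heq : ∀ t ∈ Ico y (⌊y⌋ + 1 : ℝ), layerInterp lam q t = q (⌊y⌋ + 1) := fun t ht => by
    have hfl : ⌊t⌋ = ⌊y⌋ := Int.floor_eq_iff.2 ⟨(Int.floor_le y).trans ht.1, ht.2⟩
    rw [layerInterp_of_le_fract hlam, hfl]
    linarith [Int.self_sub_floor t, Int.self_sub_floor y, ht.1, congrArg (Int.cast (R := ℝ)) hfl]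
  exact (hasDerivWithinAt_const y (Ici y) (q (⌊y⌋ + 1))).congr_of_eventuallyEq
    (eventually_of_mem (Ico_mem_nhdsGE (Int.lt_floor_add_one y)) heq)
    (heq y (left_mem_Ico.2 (Int.lt_floor_add_one y)))

theorem deriv_layerInterp_of_le_fract (hlam : 0 < lam) (hy : lam ≤ Int.fract y) :
    deriv (layerInterp lam q) y = 0 := by
  simpa using norm_deriv_le_of_hasDerivWithinAt_Ici
    (hasDerivWithinAt_layerInterp_rigid (q := q) hlam hy)

theorem lintegral_enorm_deriv_layerInterp_le (hlam : 0 < lam) (q : ℤ → E) :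
    ∫⁻ y, ‖deriv (layerInterp lam q) y‖ₑ ≤ ∑' k, edist (q k) (q (k + 1)) := by
  let slope (k : ℤ) : ℝ≥0∞ := ENNReal.ofReal lam⁻¹ * edist (q k) (q (k + 1))
  let soft (k : ℤ) : Set ℝ := Ico k (k + lam)
  have hpointwise (y : ℝ) :
      ‖deriv (layerInterp lam q) y‖ₑ ≤ ∑' k, (soft k).indicator (fun _ => slope k) y := by
    rcases lt_or_ge (Int.fract y) lam with hy | hy
    · have hmem : y ∈ soft ⌊y⌋ := ⟨Int.floor_le y, by linarith [Int.self_sub_floor y]⟩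
      calc ‖deriv (layerInterp lam q) y‖ₑ
          ≤ ‖lam⁻¹ • (q (⌊y⌋ + 1) - q ⌊y⌋)‖ₑ := enorm_le_iff_norm_le.2
            (norm_deriv_le_of_hasDerivWithinAt_Ici (hasDerivWithinAt_layerInterp_soft hy))
        _ = (soft ⌊y⌋).indicator (fun _ => slope ⌊y⌋) y := by
            rw [indicator_of_mem hmem, enorm_smul, Real.enorm_of_nonneg (by positivity),
              ← edist_eq_enorm_sub, edist_comm]
        _ ≤ ∑' k, (soft k).indicator (fun _ => slope k) y :=
            ENNReal.le_tsum (f := fun k => (soft k).indicator (fun _ => slope k) y) ⌊y⌋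
    · simp [deriv_layerInterp_of_le_fract hlam hy]
  calc ∫⁻ y, ‖deriv (layerInterp lam q) y‖ₑ
      ≤ ∫⁻ y, ∑' k, (soft k).indicator (fun _ => slope k) y := lintegral_mono hpointwise
    _ = ∑' k, slope k * volume (soft k) := by
        rw [lintegral_tsum fun k => (measurable_const.indicator measurableSet_Ico).aemeasurable]
        simp only [soft, lintegral_indicator_const measurableSet_Ico]
    _ = ∑' k, edist (q k) (q (k + 1)) := by
        refine tsum_congr fun k => ?_
        rw [Real.volume_Ico, add_sub_cancel_left, mul_right_comm,
          ← ENNReal.ofReal_mul (by positivity), inv_mul_cancel₀ hlam.ne']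
        simp

end layerInterp

/-- The `k`-th interpolation node `ε k`, pushed into a compact subinterval of `(a, b)` whose
endpoints approach `a` and `b` as `ε → 0`. -/
def layerNode (a b ε : ℝ) (k : ℤ) : ℝ :=
  max (a + min ε ((b - a) / 2)) (min (b - min ε ((b - a) / 2)) (ε * k))

section layerNode

variable {a b ε : ℝ}

theorem layerNode_mem_Ioo (hab : a < b) (hε : 0 < ε) (k : ℤ) : layerNode a b ε k ∈ Ioo a b := by
  have hpos : 0 < min ε ((b - a) / 2) := lt_min hε (by linarith)
  have hle : min ε ((b - a) / 2) ≤ (b - a) / 2 := min_le_right _ _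
  exact ⟨lt_max_of_lt_left (by linarith),
    max_lt (by linarith) (min_lt_of_left_lt (by linarith))⟩

theorem monotone_layerNode (hε : 0 ≤ ε) : Monotone (layerNode a b ε) := fun _ _ hij =>
  max_le_max_left _ (min_le_min_left _ (mul_le_mul_of_nonneg_left (Int.cast_le.2 hij) hε))

theorem abs_layerNode_sub_le {t : ℝ} (ht : t ∈ Ioo a b) {k : ℤ}
    (hk : |ε * k - t| ≤ ε) : |layerNode a b ε k - t| ≤ ε := by
  have : min ε ((b - a) / 2) ≤ ε := min_le_left _ _
  obtain ⟨hlo, hhi⟩ := abs_le.1 hk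
  obtain ⟨hat, htb⟩ := ht
  have hlower : t - ε ≤ layerNode a b ε k :=
    le_max_of_le_right (le_min (by linarith) (by linarith))
  have hupper : layerNode a b ε k ≤ t + ε :=
    max_le (by linarith) (min_le_of_right_le (by linarith))
  exact abs_le.2 ⟨by linarith, by linarith⟩

end layerNode

/-- The layered interpolant of `g` at scale `ε`: on each rigid layer it is constant, equal to the
value of `g` at a node in `(a, b)` that does not depend on `g`. -/
def layerApprox (a b lam ε : ℝ) (g : ℝ → E) (t : ℝ) : E :=
  layerInterp lam (fun k => g (layerNode a b ε k)) (ε⁻¹ * t)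

section layerApprox

variable {a b lam ε t : ℝ} {g : ℝ → E}

theorem layerApprox_of_le_fract (hlam : 0 < lam) (g : ℝ → E) (ht : lam ≤ Int.fract (ε⁻¹ * t)) :
    layerApprox a b lam ε g t = g (layerNode a b ε (⌊ε⁻¹ * t⌋ + 1)) :=
  layerInterp_of_le_fract hlam ht

theorem deriv_layerApprox_of_le_fract (hlam : 0 < lam) (ht : lam ≤ Int.fract (ε⁻¹ * t)) :
    deriv (layerApprox a b lam ε g) t = 0 := by
  have := deriv_comp_mul_left ε⁻¹ (layerInterp lam fun k => g (layerNode a b ε k)) t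
  rwa [deriv_layerInterp_of_le_fract hlam ht, smul_zero] at this

theorem lipschitzWith_layerApprox (hlam : lam ∈ Ioc (0 : ℝ) 1) (hab : a < b) (hε : 0 < ε)
    (hg : BoundedVariationOn g (Ioo a b)) :
    ∃ K, LipschitzWith K (layerApprox a b lam ε g) :=
  ⟨_, (lipschitzWith_layerInterp hlam fun k =>
    hg.dist_le (layerNode_mem_Ioo hab hε k) (layerNode_mem_Ioo hab hε (k + 1))).comp
      (lipschitzWith_smul ε⁻¹)⟩

theorem layerApprox_mem_of_convex {C : Set E} (hC : Convex ℝ C) (hlam : 0 ≤ lam) (t : ℝ)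
    (hfloor : g (layerNode a b ε ⌊ε⁻¹ * t⌋) ∈ C)
    (hsucc : g (layerNode a b ε (⌊ε⁻¹ * t⌋ + 1)) ∈ C) : layerApprox a b lam ε g t ∈ C :=
  hC.segment_subset hfloor hsucc
    (layerInterp_mem_segment hlam (fun k => g (layerNode a b ε k)) (ε⁻¹ * t))

theorem lintegral_enorm_deriv_layerApprox_le (hlam : 0 < lam) (hab : a < b) (hε : 0 < ε)
    (g : ℝ → E) :
    ∫⁻ t, ‖deriv (layerApprox a b lam ε g) t‖ₑ ≤ eVariationOn g (Ioo a b) :=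
  calc ∫⁻ t, ‖deriv (layerApprox a b lam ε g) t‖ₑ
      = ∫⁻ y, ‖deriv (layerInterp lam fun k => g (layerNode a b ε k)) y‖ₑ :=
        lintegral_enorm_deriv_comp_mul_left _ (inv_ne_zero hε.ne')
    _ ≤ ∑' k, edist (g (layerNode a b ε k)) (g (layerNode a b ε (k + 1))) :=
        lintegral_enorm_deriv_layerInterp_le hlam _
    _ ≤ eVariationOn (g ∘ layerNode a b ε) univ := tsum_edist_succ_le_eVariationOn _
    _ ≤ eVariationOn g (Ioo a b) :=
        eVariationOn.comp_le_of_monotoneOn g _ ((monotone_layerNode hε.le).monotoneOn _)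
          fun k _ => layerNode_mem_Ioo hab hε k

theorem tendsto_layerApprox (hlam : 0 ≤ lam) {ε : ℕ → ℝ} (hε : ∀ n, 0 < ε n)
    (hε0 : Tendsto ε atTop (𝓝 0)) (ht : t ∈ Ioo a b) (hg : ContinuousAt g t) :
    Tendsto (fun n => layerApprox a b lam (ε n) g t) atTop (𝓝 (g t)) := by
  have hnode (k : ℕ → ℤ) (hk : ∀ n, |ε n * k n - t| ≤ ε n) :
      Tendsto (fun n => g (layerNode a b (ε n) (k n))) atTop (𝓝 (g t)) :=
    hg.tendsto.comp <| tendsto_iff_norm_sub_tendsto_zero.2 <| squeeze_zero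
      (fun n => norm_nonneg _) (fun n => abs_layerNode_sub_le ht (hk n)) hε0
  have hoffset (n : ℕ) (k : ℤ) : ε n * k - t = ε n * (k - (ε n)⁻¹ * t) := by
    rw [mul_sub, mul_inv_cancel_left₀ (hε n).ne']
  have hfloor := hnode (fun n => ⌊(ε n)⁻¹ * t⌋) fun n => by
    rw [hoffset, abs_mul, abs_of_pos (hε n)]
    refine mul_le_of_le_one_right (hε n).le (abs_le.2 ⟨?_, ?_⟩)
    · linarith [Int.lt_floor_add_one ((ε n)⁻¹ * t)]
    · linarith [Int.floor_le ((ε n)⁻¹ * t)]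
  have hsucc := hnode (fun n => ⌊(ε n)⁻¹ * t⌋ + 1) fun n => by
    rw [hoffset, abs_mul, abs_of_pos (hε n)]
    refine mul_le_of_le_one_right (hε n).le (abs_le.2 ⟨?_, ?_⟩) <;> push_cast
    · linarith [Int.lt_floor_add_one ((ε n)⁻¹ * t)]
    · linarith [Int.floor_le ((ε n)⁻¹ * t)]
  refine Metric.tendsto_nhds.2 fun η hη => ?_
  filter_upwards [Metric.tendsto_nhds.1 hfloor η hη, Metric.tendsto_nhds.1 hsucc η hη] with n h₁ h₂
  exact layerApprox_mem_of_convex (convex_ball (g t) η) hlam t h₁ h₂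

end layerApprox

/-- Lipschitz functions on the line that are bounded with bounded total variation, uniformly in `n`,
and converge to `f` almost everywhere on `s`. -/
structure IsBVApprox (s : Set ℝ) (fn : ℕ → ℝ → E) (f : ℝ → E) : Prop where
  lipschitz : ∀ n, ∃ K, LipschitzWith K (fn n)
  norm_le : ∃ M, ∀ n t, ‖fn n t‖ ≤ M
  lintegral_deriv_le : ∃ V : ℝ≥0∞, V ≠ ⊤ ∧ ∀ n, ∫⁻ t, ‖deriv (fn n) t‖ₑ ≤ V
  tendsto : ∀ᵐ t, t ∈ s → Tendsto (fun n => fn n t) atTop (𝓝 (f t))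

theorem isBVApprox_layerApprox [FiniteDimensional ℝ E] {a b lam : ℝ} {g : ℝ → E} {ε : ℕ → ℝ}
    (hlam : lam ∈ Ioc (0 : ℝ) 1) (hab : a < b) (hε : ∀ n, 0 < ε n)
    (hε0 : Tendsto ε atTop (𝓝 0)) (hg : BoundedVariationOn g (Ioo a b)) :
    IsBVApprox (Ioo a b) (fun n => layerApprox a b lam (ε n) g) g where
  lipschitz n := lipschitzWith_layerApprox hlam hab (hε n) hg
  norm_le := by
    obtain ⟨c, hc⟩ : (Ioo a b).Nonempty := nonempty_Ioo.2 hab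
    refine ⟨‖g c‖ + (eVariationOn g (Ioo a b)).toReal, fun n t => ?_⟩
    have hnode (k : ℤ) : g (layerNode a b (ε n) k) ∈
        Metric.closedBall (0 : E) (‖g c‖ + (eVariationOn g (Ioo a b)).toReal) := by
      rw [mem_closedBall_zero_iff]
      linarith [norm_le_norm_add_norm_sub' (g (layerNode a b (ε n) k)) (g c),
        hg.dist_le (layerNode_mem_Ioo hab (hε n) k) hc,
        dist_eq_norm (g (layerNode a b (ε n) k)) (g c)]
    exact mem_closedBall_zero_iff.1
      (layerApprox_mem_of_convex (convex_closedBall _ _) hlam.1.le t (hnode _) (hnode _))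
  lintegral_deriv_le :=
    ⟨_, hg, fun n => lintegral_enorm_deriv_layerApprox_le hlam.1 hab (hε n) g⟩
  tendsto := by
    filter_upwards [hg.locallyBoundedVariationOn.ae_differentiableWithinAt_of_mem] with t hdiff ht
    exact tendsto_layerApprox hlam.1.le hε hε0 ht
      ((hdiff ht).continuousWithinAt.continuousAt (isOpen_Ioo.mem_nhds ht))

end OneDimensional

section WeakStarConvergence

theorem exists_contDiff_tendstoUniformly {E : Type*} [NormedAddCommGroup E] [NormedSpace ℝ E]
    [FiniteDimensional ℝ E] {φ : E → ℝ} (hφ : Continuous φ) :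
    ∃ φk : ℕ → E → ℝ, (∀ k, ContDiff ℝ (⊤ : ℕ∞) (φk k)) ∧ (∀ k, tsupport (φk k) ⊆ tsupport φ) ∧
      TendstoUniformly φk φ atTop := by
  have happrox (k : ℕ) := hφ.exists_contDiff_approx (⊤ : ℕ∞) (ε := fun _ => 1 / ((k : ℝ) + 1))
    continuous_const fun _ => Nat.one_div_pos_of_nat
  choose φk hsmooth hdist hsupp using happrox
  refine ⟨φk, hsmooth, fun k => closure_mono (hsupp k),
    Metric.tendstoUniformly_iff.2 fun δ hδ => ?_⟩
  filter_upwards [tendsto_one_div_add_atTop_nhds_zero_nat.eventually_lt_const hδ] with k hk x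
  rw [dist_comm]
  exact (hdist k x).trans hk

section Pairing

variable {α ι : Type*} [TopologicalSpace α] [MeasurableSpace α] [OpensMeasurableSpace α]
  {μ : Measure α}

theorem integrable_mul_of_hasCompactSupport {φ h : α → ℝ} (hφ : Continuous φ)
    (hc : HasCompactSupport φ) (hh : Integrable h μ) : Integrable (fun x => φ x * h x) μ := by
  obtain ⟨C, hC⟩ := hc.exists_bound_of_continuous hφ
  exact hh.bdd_mul hφ.aestronglyMeasurable (ae_of_all _ hC)

theorem tendstoUniformly_integral_mul {φk : ℕ → α → ℝ} {φ : α → ℝ} {h : ι → α → ℝ} {C : ℝ}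
    (hunif : TendstoUniformly φk φ atTop) (hφk : ∀ k, Continuous (φk k))
    (hck : ∀ k, HasCompactSupport (φk k)) (hφ : Continuous φ) (hc : HasCompactSupport φ)
    (hh : ∀ i, Integrable (h i) μ) (hC : ∀ i, ∫ x, ‖h i x‖ ∂μ ≤ C) :
    TendstoUniformly (fun k i => ∫ x, φk k x * h i x ∂μ) (fun i => ∫ x, φ x * h i x ∂μ) atTop := by
  refine Metric.tendstoUniformly_iff.2 fun η hη => ?_
  have hC1 : 0 < |C| + 1 := by positivity
  filter_upwards [Metric.tendstoUniformly_iff.1 hunif (η / (|C| + 1)) (div_pos hη hC1)] with k hk i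
  calc dist (∫ x, φ x * h i x ∂μ) (∫ x, φk k x * h i x ∂μ)
      = ‖∫ x, (φ x - φk k x) * h i x ∂μ‖ := by
        rw [dist_eq_norm, ← integral_sub (integrable_mul_of_hasCompactSupport hφ hc (hh i))
          (integrable_mul_of_hasCompactSupport (hφk k) (hck k) (hh i))]
        simp only [sub_mul]
    _ ≤ ∫ x, η / (|C| + 1) * ‖h i x‖ ∂μ :=
        norm_integral_le_of_norm_le ((hh i).norm.const_mul _) <| ae_of_all _ fun x => by
          rw [norm_mul, ← dist_eq_norm]
          exact mul_le_mul_of_nonneg_right (hk x).le (norm_nonneg _)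
    _ ≤ η / (|C| + 1) * |C| := by
        rw [integral_const_mul]
        gcongr
        exact (hC i).trans (le_abs_self C)
    _ < η := by
        rw [div_mul_eq_mul_div, div_lt_iff₀ hC1]
        linarith

theorem tendsto_integral_mul_of_tendstoUniformly {φk : ℕ → α → ℝ} {φ h : α → ℝ}
    (hunif : TendstoUniformly φk φ atTop) (hφk : ∀ k, Continuous (φk k))
    (hck : ∀ k, HasCompactSupport (φk k)) (hφ : Continuous φ) (hc : HasCompactSupport φ)
    (hh : Integrable h μ) :
    Tendsto (fun k => ∫ x, φk k x * h x ∂μ) atTop (𝓝 (∫ x, φ x * h x ∂μ)) :=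
  (tendstoUniformly_integral_mul (h := fun _ : Unit => h) hunif hφk hck hφ hc (fun _ => hh)
    fun _ => le_rfl).tendsto_at ()

end Pairing

theorem vnorm_eq_norm_vToE (v : V2) : vnorm v = ‖vToE v‖ := by
  simp [vnorm, vToE, EuclideanSpace.norm_eq, Fin.sum_univ_two]

theorem mnorm_eq_norm_mToE (M : Mat2) : mnorm M = ‖mToE M‖ := by
  simp [mnorm, mToE, EuclideanSpace.norm_eq, Fintype.sum_prod_type]

theorem norm_apply_le_vnorm (v : V2) (i : Fin 2) : ‖v i‖ ≤ vnorm v :=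
  (PiLp.norm_apply_le (vToE v) i).trans_eq (vnorm_eq_norm_vToE v).symm

theorem norm_apply_le_mnorm (M : Mat2) (i j : Fin 2) : ‖M i j‖ ≤ mnorm M :=
  (PiLp.norm_apply_le (mToE M) (i, j)).trans_eq (mnorm_eq_norm_mToE M).symm

theorem continuous_vnorm : Continuous vnorm := by unfold vnorm; fun_prop

theorem vnorm_le_two_mul_norm (v : V2) : vnorm v ≤ 2 * ‖v‖ := by
  refine Real.sqrt_le_iff.2 ⟨by positivity, ?_⟩
  have h₀ := sq_le_sq' (abs_le.1 (norm_le_pi_norm v 0)).1 (abs_le.1 (norm_le_pi_norm v 0)).2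
  have h₁ := sq_le_sq' (abs_le.1 (norm_le_pi_norm v 1)).1 (abs_le.1 (norm_le_pi_norm v 1)).2
  nlinarith [sq_nonneg ‖v‖]

variable {Ω : Set V2} {u : V2 → V2} {gu : V2 → Mat2} {σ : Measure V2} {gs : V2 → Mat2}
  {un : ℕ → V2 → V2} {gn : ℕ → V2 → Mat2}

theorem integrableOn_vnorm {f : V2 → V2} (hf : IntegrableOn f Ω) :
    IntegrableOn (fun x => vnorm (f x)) Ω :=
  (hf.norm.const_mul 2).mono' (continuous_vnorm.comp_aestronglyMeasurable hf.1) <|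
    ae_of_all _ fun x => by
      rw [vnorm_eq_norm_vToE, norm_norm, ← vnorm_eq_norm_vToE]
      exact vnorm_le_two_mul_norm (f x)

theorem HasBVDerivOn.integrable_gs (hu : HasBVDerivOn Ω u gu σ gs) (i j : Fin 2) :
    Integrable (fun x => gs x i j) σ := by
  have : IsFiniteMeasure σ := ⟨lt_top_iff_ne_top.2 hu.fin⟩
  refine Integrable.of_bound (hu.meas_gs i j).aestronglyMeasurable 1 ?_
  filter_upwards [hu.unit] with x hx using hx ▸ norm_apply_le_mnorm (gs x) i j

theorem continuous_pd {φ : V2 → ℝ} (hφ : ContDiff ℝ 1 φ) (j : Fin 2) : Continuous (pd j φ) :=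
  (hφ.continuous_fderiv one_ne_zero).clm_apply continuous_const

theorem hasCompactSupport_pd {φ : V2 → ℝ} (hc : HasCompactSupport φ) (j : Fin 2) :
    HasCompactSupport (pd j φ) :=
  hc.fderiv_apply ℝ _

theorem L1ConvOn.tendsto_setIntegral_mul (h : L1ConvOn Ω un u)
    (hun : ∀ n, IntegrableOn (un n) Ω) (hu : IntegrableOn u Ω) {w : V2 → ℝ} (hw : Continuous w)
    (hc : HasCompactSupport w) (i : Fin 2) :
    Tendsto (fun n => ∫ x in Ω, un n x i * w x) atTop (𝓝 (∫ x in Ω, u x i * w x)) := by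
  obtain ⟨W, hW⟩ := hc.exists_bound_of_continuous hw
  have hint {f : V2 → V2} (hf : IntegrableOn f Ω) : IntegrableOn (fun x => f x i * w x) Ω := by
    simp only [mul_comm _ (w _)]
    exact integrable_mul_of_hasCompactSupport hw hc (Integrable.eval hf i)
  refine tendsto_iff_norm_sub_tendsto_zero.2 (squeeze_zero (fun n => norm_nonneg _) (fun n => ?_)
    (by simpa using Tendsto.const_mul W h))
  calc ‖(∫ x in Ω, un n x i * w x) - ∫ x in Ω, u x i * w x‖
      = ‖∫ x in Ω, w x * (un n x - u x) i‖ := by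
        rw [← integral_sub (hint (hun n)) (hint hu)]
        congr 2 with x
        rw [Pi.sub_apply]
        ring
    _ ≤ ∫ x in Ω, W * vnorm (un n x - u x) :=
        norm_integral_le_of_norm_le ((integrableOn_vnorm ((hun n).sub hu)).const_mul W) <|
          ae_of_all _ fun x => by
            rw [norm_mul]
            exact mul_le_mul (hW x) (norm_apply_le_vnorm _ i) (norm_nonneg _)
              ((norm_nonneg _).trans (hW x))
    _ = W * ∫ x in Ω, vnorm (un n x - u x) := integral_const_mul _ _

theorem measConv_of_L1ConvOn (hu : HasBVDerivOn Ω u gu σ gs)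
    (hun : ∀ n, IsSobolev11On Ω (un n) (gn n)) (hconv : L1ConvOn Ω un u) {C : ℝ}
    (hC : ∀ n i j, ∫ x in Ω, ‖gn n x i j‖ ≤ C) : MeasConv Ω gn gu σ gs := by
  intro φ hφ hc hsupp i j
  obtain ⟨φk, hsmooth, hsuppk, hunif⟩ := exists_contDiff_tendstoUniformly hφ
  have hck (k : ℕ) : HasCompactSupport (φk k) :=
    hc.of_isClosed_subset (isClosed_tsupport _) (hsuppk k)
  have hφk (k : ℕ) : Continuous (φk k) := (hsmooth k).continuous
  have hsmoothTest (k : ℕ) : Tendsto (fun n => ∫ x in Ω, φk k x * gn n x i j) atTop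
      (𝓝 ((∫ x in Ω, φk k x * gu x i j) + ∫ x, φk k x * gs x i j ∂σ)) := by
    have hpair := hconv.tendsto_setIntegral_mul (fun n => (hun n).int_u) hu.int_u
      (continuous_pd ((hsmooth k).of_le (by simp)) j) (hasCompactSupport_pd (hck k) j) i
    have hibp (n : ℕ) := (hun n).ibp (φk k) (hsmooth k) (hck k) ((hsuppk k).trans hsupp) i j
    rw [hu.ibp (φk k) (hsmooth k) (hck k) ((hsuppk k).trans hsupp) i j] at hpair
    simpa only [hibp, neg_neg, neg_sub, sub_neg_eq_add, add_comm] using hpair.neg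
  exact (tendstoUniformly_integral_mul hunif hφk hck hφ hc (fun n => (hun n).int_gu i j)
      fun n => hC n i j).tendsto_of_eventually_tendsto (Eventually.of_forall hsmoothTest)
    ((tendsto_integral_mul_of_tendstoUniformly hunif hφk hck hφ hc (hu.int_gu i j)).add
      (tendsto_integral_mul_of_tendstoUniformly hunif hφk hck hφ hc (hu.integrable_gs i j)))

theorem l1ConvOn_of_ae_tendsto (hΩ : MeasurableSet Ω) (hΩfin : volume Ω ≠ ⊤) {D : ℝ}
    (hun : ∀ n, AEStronglyMeasurable (un n) (volume.restrict Ω))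
    (hu : AEStronglyMeasurable u (volume.restrict Ω)) (hD : ∀ n, ∀ x ∈ Ω, ‖un n x‖ ≤ D)
    (hlim : ∀ᵐ x ∂volume.restrict Ω, Tendsto (fun n => un n x) atTop (𝓝 (u x))) :
    L1ConvOn Ω un u := by
  have : IsFiniteMeasure (volume.restrict Ω) := isFiniteMeasure_restrict.2 hΩfin
  have hvnorm0 : vnorm 0 = 0 := by simp [vnorm]
  have hDCT := tendsto_integral_of_dominated_convergence (μ := volume.restrict Ω)
    (F := fun n x => vnorm (un n x - u x)) (f := fun _ => 0) (fun _ => 2 * (D + D))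
    (fun n => continuous_vnorm.comp_aestronglyMeasurable ((hun n).sub hu)) (integrable_const _)
    (fun n => ?_) ?_
  · simpa only [L1ConvOn, integral_zero] using hDCT
  · filter_upwards [hlim, ae_restrict_mem hΩ] with x hx hxΩ
    have hux : ‖u x‖ ≤ D := le_of_tendsto' hx.norm fun n => hD n x hxΩ
    rw [vnorm_eq_norm_vToE, norm_norm, ← vnorm_eq_norm_vToE]
    refine (vnorm_le_two_mul_norm _).trans ?_
    gcongr
    exact (norm_sub_le _ _).trans (add_le_add (hD n x hxΩ) hux)
  · filter_upwards [hlim] with x hx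
    have := (continuous_vnorm.tendsto _).comp (hx.sub_const (u x))
    rwa [sub_self, hvnorm0] at this

end WeakStarConvergence

section IntegrationByParts

variable {Ω : Set V2} {u v : V2 → V2} {K : NNReal}

/-- The matrix of classical partial derivatives of a planar map; where a component is not
differentiable, its row is the junk value `0`. -/
def jacobian (u : V2 → V2) (x : V2) : Mat2 := Matrix.of fun i j => pd j (fun y => u y i) x

theorem jacobian_eq_toMatrix' {u' : V2 →L[ℝ] V2} {x : V2} (h : HasFDerivAt u u' x) :
    jacobian u x = LinearMap.toMatrix' (u' : V2 →ₗ[ℝ] V2) := by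
  ext i j
  simp only [jacobian, pd, Matrix.of_apply, LinearMap.toMatrix'_apply,
    (hasFDerivAt_pi'.1 h i).fderiv]
  rfl

theorem jacobian_eq_of_eqOn (hΩ : IsOpen Ω) (huv : EqOn u v Ω) {x : V2} (hx : x ∈ Ω) :
    jacobian u x = jacobian v x := by
  ext i j
  have : (fun y => u y i) =ᶠ[𝓝 x] fun y => v y i :=
    (huv.eventuallyEq_of_mem (hΩ.mem_nhds hx)).fun_comp (· i)
  simp only [jacobian, pd, Matrix.of_apply, this.fderiv_eq]

theorem IsSobolev11On.congr {gu gv : V2 → Mat2} (hΩ : MeasurableSet Ω)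
    (h : IsSobolev11On Ω u gu) (huv : EqOn u v Ω) (hg : EqOn gu gv Ω) :
    IsSobolev11On Ω v gv where
  int_u := h.int_u.congr_fun huv hΩ
  int_gu i j := (h.int_gu i j).congr_fun (fun x hx => by simp only [hg hx]) hΩ
  ibp φ hφ hc hsupp i j :=
    calc ∫ x in Ω, v x i * pd j φ x
        = ∫ x in Ω, u x i * pd j φ x := setIntegral_congr_fun hΩ fun x hx => by rw [huv hx]
      _ = -∫ x in Ω, φ x * gu x i j := h.ibp φ hφ hc hsupp i j
      _ = -∫ x in Ω, φ x * gv x i j := by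
          rw [setIntegral_congr_fun hΩ fun x hx => by rw [hg hx]]

theorem ae_lineDeriv_single_eq_pd {f : V2 → ℝ} (hf : LipschitzWith K f) (j : Fin 2) :
    (fun x => lineDeriv ℝ f x (Pi.single j 1)) =ᵐ[volume] pd j f := by
  filter_upwards [hf.ae_differentiableAt (μ := volume)] with x hx
  exact hx.lineDeriv_eq_fderiv

theorem integral_mul_pd_eq_neg {f φ : V2 → ℝ} (hf : LipschitzWith K f)
    (hφ : ContDiff ℝ 1 φ) (hc : HasCompactSupport φ) (j : Fin 2) :
    ∫ x, f x * pd j φ x = -∫ x, φ x * pd j f x := by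
  obtain ⟨C, hC⟩ := hφ.lipschitzWith_of_hasCompactSupport hc one_ne_zero
  have hpdφ (x : V2) : lineDeriv ℝ φ x (-Pi.single j 1) = -pd j φ x := by
    rw [lineDeriv_neg, (hφ.differentiable one_ne_zero x).lineDeriv_eq_fderiv, pd]
  calc ∫ x, f x * pd j φ x
      = -∫ x, lineDeriv ℝ φ x (-Pi.single j 1) * f x := by
        rw [← integral_neg]
        exact integral_congr_ae (ae_of_all _ fun x => by simp only [hpdφ]; ring)
    _ = -∫ x, lineDeriv ℝ f x (Pi.single j 1) * φ x := by
        rw [hf.integral_lineDeriv_mul_eq hC hc]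
    _ = -∫ x, φ x * pd j f x := by
        congr 1
        refine integral_congr_ae ?_
        filter_upwards [ae_lineDeriv_single_eq_pd hf j] with x hx
        rw [hx, mul_comm]

theorem integrableOn_pd_of_lipschitzWith {f : V2 → ℝ} (hf : LipschitzWith K f)
    (hΩ : Bornology.IsBounded Ω) (j : Fin 2) : IntegrableOn (pd j f) Ω := by
  have : IsFiniteMeasure (volume.restrict Ω) := isFiniteMeasure_restrict.2 hΩ.measure_lt_top.ne
  refine Integrable.congr (Integrable.of_bound (C := K * ‖(Pi.single j 1 : V2)‖)
    (measurable_lineDeriv hf.continuous).aestronglyMeasurable ?_)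
    (ae_restrict_of_ae (ae_lineDeriv_single_eq_pd hf j))
  exact ae_of_all _ fun x => norm_lineDeriv_le_of_lipschitz ℝ hf

theorem isSobolev11On_of_lipschitzWith (hu : LipschitzWith K u) (hΩ : Bornology.IsBounded Ω) :
    IsSobolev11On Ω u (jacobian u) where
  int_u := (hu.continuous.locallyIntegrable.integrableOn_isCompact hΩ.isCompact_closure).mono_set
    subset_closure
  int_gu i j := integrableOn_pd_of_lipschitzWith ((LipschitzWith.eval i).comp hu) hΩ j
  ibp φ hφ hc hsupp i j := by
    have hφ0 {x : V2} (hx : x ∉ Ω) : φ x = 0 :=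
      image_eq_zero_of_notMem_tsupport fun h => hx (hsupp h)
    have hpdφ0 {x : V2} (hx : x ∉ Ω) : pd j φ x = 0 := by
      rw [pd, image_eq_zero_of_notMem_tsupport fun h => hx (hsupp (tsupport_fderiv_subset ℝ h)),
        zero_apply]
    rw [setIntegral_eq_integral_of_forall_compl_eq_zero fun x hx => by rw [hpdφ0 hx, mul_zero],
      setIntegral_eq_integral_of_forall_compl_eq_zero fun x hx => by rw [hφ0 hx, zero_mul]]
    exact integral_mul_pd_eq_neg ((LipschitzWith.eval i).comp hu) (hφ.of_le (by simp)) hc j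

theorem isSobolev11On_of_lipschitzOnWith (hu : LipschitzOnWith K u Ω) (hΩo : IsOpen Ω)
    (hΩb : Bornology.IsBounded Ω) : IsSobolev11On Ω u (jacobian u) := by
  obtain ⟨v, hv, huv⟩ := hu.extend_pi
  exact (isSobolev11On_of_lipschitzWith hv hΩb).congr hΩo.measurableSet huv.symm
    fun x hx => jacobian_eq_of_eqOn hΩo huv.symm hx

end IntegrationByParts

section LayeredMap

/-- The layered map `x ↦ A(x₂)x + B(x₂)`, the shape shared by the limit `u` and its
approximations. -/
def layeredMap (A : ℝ → V2 →L[ℝ] V2) (B : ℝ → V2) (x : V2) : V2 := A (x 1) x + B (x 1)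

variable {A : ℝ → V2 →L[ℝ] V2} {B : ℝ → V2} {Ω : Set V2} {r M : ℝ}

theorem norm_layeredMap_le (hA : ∀ t, ‖A t‖ ≤ M) {N : ℝ} (hB : ∀ t, ‖B t‖ ≤ N) {x : V2}
    (hx : ‖x‖ ≤ r) : ‖layeredMap A B x‖ ≤ M * r + N :=
  calc ‖A (x 1) x + B (x 1)‖ ≤ ‖A (x 1)‖ * ‖x‖ + ‖B (x 1)‖ :=
        (norm_add_le _ _).trans (add_le_add_left ((A (x 1)).le_opNorm x) _)
    _ ≤ M * r + N := by
        gcongr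
        exacts [(norm_nonneg _).trans (hA 0), hA _, hB _]

theorem lipschitzOnWith_layeredMap {K L : NNReal} (hA : LipschitzWith K A)
    (hB : LipschitzWith L B) (hM : ∀ t, ‖A t‖ ≤ M) (hr : ∀ x ∈ Ω, ‖x‖ ≤ r) :
    LipschitzOnWith (K * r + M + L).toNNReal (layeredMap A B) Ω := by
  refine LipschitzOnWith.of_dist_le' fun x hx y _ => ?_
  have hcoord : dist (x 1) (y 1) ≤ ‖x - y‖ := (dist_le_pi_dist x y 1).trans_eq (dist_eq_norm x y)
  have hAxy : ‖A (x 1) - A (y 1)‖ ≤ K * ‖x - y‖ := by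
    rw [← dist_eq_norm]
    exact (hA.dist_le_mul _ _).trans (by gcongr)
  have hBxy : ‖B (x 1) - B (y 1)‖ ≤ L * ‖x - y‖ := by
    rw [← dist_eq_norm]
    exact (hB.dist_le_mul _ _).trans (by gcongr)
  calc dist (layeredMap A B x) (layeredMap A B y)
      = ‖(A (x 1) - A (y 1)) x + A (y 1) (x - y) + (B (x 1) - B (y 1))‖ := by
        rw [dist_eq_norm, layeredMap, layeredMap, sub_apply, map_sub]
        congr 1
        abel
    _ ≤ ‖A (x 1) - A (y 1)‖ * ‖x‖ + ‖A (y 1)‖ * ‖x - y‖ + ‖B (x 1) - B (y 1)‖ :=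
        norm_add₃_le.trans (by gcongr <;> exact ContinuousLinearMap.le_opNorm _ _)
    _ ≤ K * ‖x - y‖ * r + M * ‖x - y‖ + L * ‖x - y‖ := by
        gcongr
        exacts [hr x hx, hM _]
    _ = (K * r + M + L) * dist x y := by rw [dist_eq_norm]; ring

theorem hasFDerivAt_layeredMap {x : V2} (hA : DifferentiableAt ℝ A (x 1))
    (hB : DifferentiableAt ℝ B (x 1)) :
    HasFDerivAt (layeredMap A B) (A (x 1) + (ContinuousLinearMap.proj (R := ℝ) 1).smulRight
      (deriv A (x 1) x + deriv B (x 1))) x := by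
  have hcoord : HasFDerivAt (fun y : V2 => y 1) (ContinuousLinearMap.proj (R := ℝ) 1) x :=
    hasFDerivAt_apply 1 x
  have hAx := (hA.hasFDerivAt.comp x hcoord).clm_apply (hasFDerivAt_id x)
  refine (hAx.add (hB.hasFDerivAt.comp x hcoord)).congr_fderiv ?_
  ext h : 1
  simp [add_assoc, smul_add]

theorem ae_differentiableAt_comp_eval_one {F : Type*} [NormedAddCommGroup F] [NormedSpace ℝ F]
    [FiniteDimensional ℝ F] {f : ℝ → F} {K : NNReal} (hf : LipschitzWith K f) :
    ∀ᵐ x : V2, DifferentiableAt ℝ f (x 1) :=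
  (Measure.quasiMeasurePreserving_eval (fun _ : Fin 2 => (volume : Measure ℝ)) 1).ae
    hf.ae_differentiableAt_real

theorem jacobian_layeredMap_of_deriv_eq_zero {x : V2} (hA : DifferentiableAt ℝ A (x 1))
    (hB : DifferentiableAt ℝ B (x 1)) (hA' : deriv A (x 1) = 0) (hB' : deriv B (x 1) = 0) :
    jacobian (layeredMap A B) x = LinearMap.toMatrix' (A (x 1) : V2 →ₗ[ℝ] V2) := by
  rw [jacobian_eq_toMatrix' (hasFDerivAt_layeredMap hA hB), hA', hB']
  simp

theorem norm_toMatrix'_apply_le (L : V2 →L[ℝ] V2) (i j : Fin 2) :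
    ‖LinearMap.toMatrix' (L : V2 →ₗ[ℝ] V2) i j‖ ≤ ‖L‖ :=
  calc ‖LinearMap.toMatrix' (L : V2 →ₗ[ℝ] V2) i j‖ = ‖L (Pi.single j 1) i‖ := by
        rw [LinearMap.toMatrix'_apply]; rfl
    _ ≤ ‖L (Pi.single j 1)‖ := norm_le_pi_norm _ i
    _ ≤ ‖L‖ := L.unit_le_opNorm _ (by rw [Pi.norm_single, norm_one])

theorem norm_jacobian_layeredMap_apply_le {x : V2} (hA : DifferentiableAt ℝ A (x 1))
    (hB : DifferentiableAt ℝ B (x 1)) (i j : Fin 2) :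
    ‖jacobian (layeredMap A B) x i j‖ ≤
      ‖A (x 1)‖ + (‖x‖ * ‖deriv A (x 1)‖ + ‖deriv B (x 1)‖) := by
  have hcoord : ‖ContinuousLinearMap.proj (R := ℝ) (φ := fun _ : Fin 2 => ℝ) 1‖ ≤ 1 :=
    ContinuousLinearMap.opNorm_le_bound _ zero_le_one fun h =>
      (norm_le_pi_norm h 1).trans_eq (one_mul _).symm
  have hslope : ‖deriv A (x 1) x + deriv B (x 1)‖ ≤ ‖x‖ * ‖deriv A (x 1)‖ + ‖deriv B (x 1)‖ :=
    (norm_add_le _ _).trans <| by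
      rw [mul_comm]
      exact add_le_add_left ((deriv A (x 1)).le_opNorm x) _
  rw [jacobian_eq_toMatrix' (hasFDerivAt_layeredMap hA hB)]
  refine (norm_toMatrix'_apply_le _ i j).trans ((norm_add_le _ _).trans ?_)
  gcongr
  rw [ContinuousLinearMap.norm_smulRight_apply]
  exact (mul_le_of_le_one_left (norm_nonneg _) hcoord).trans hslope

theorem setLIntegral_comp_eval_one_le (hΩ : MeasurableSet Ω) (hr : ∀ x ∈ Ω, ‖x‖ ≤ r)
    {f : ℝ → ℝ≥0∞} (hf : Measurable f) :
    ∫⁻ x in Ω, f (x 1) ≤ ENNReal.ofReal (2 * r) * ∫⁻ t, f t := by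
  let strip : ℝ → ℝ≥0∞ := (Icc (-r) r).indicator 1
  have hstrip : Measurable strip := measurable_one.indicator measurableSet_Icc
  calc ∫⁻ x in Ω, f (x 1) ≤ ∫⁻ x in Ω, strip (x 0) * f (x 1) :=
        setLIntegral_mono' hΩ fun x hx => by
          have : x 0 ∈ Icc (-r) r := abs_le.1 ((norm_le_pi_norm x 0).trans (hr x hx))
          simp [strip, this]
    _ ≤ ∫⁻ x : V2, strip (x 0) * f (x 1) := setLIntegral_le_lintegral _ _
    _ = ∫⁻ z : ℝ × ℝ, strip z.1 * f z.2 :=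
        (volume_preserving_finTwoArrow ℝ).lintegral_comp (f := fun z => strip z.1 * f z.2)
          (by fun_prop)
    _ = (∫⁻ s, strip s) * ∫⁻ t, f t :=
        lintegral_prod_mul hstrip.aemeasurable hf.aemeasurable
    _ = ENNReal.ofReal (2 * r) * ∫⁻ t, f t := by
        rw [lintegral_indicator_one measurableSet_Icc, Real.volume_Icc, sub_neg_eq_add, two_mul]

theorem setLIntegral_enorm_jacobian_layeredMap_le {K L : NNReal} (hA : LipschitzWith K A)
    (hB : LipschitzWith L B) (hM : ∀ t, ‖A t‖ ≤ M) (hΩ : MeasurableSet Ω)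
    (hr : ∀ x ∈ Ω, ‖x‖ ≤ r) (i j : Fin 2) :
    ∫⁻ x in Ω, ‖jacobian (layeredMap A B) x i j‖ₑ ≤ ENNReal.ofReal M * volume Ω +
      ENNReal.ofReal (2 * r) *
        (ENNReal.ofReal r * (∫⁻ t, ‖deriv A t‖ₑ) + ∫⁻ t, ‖deriv B t‖ₑ) := by
  let slope (t : ℝ) : ℝ≥0∞ := ENNReal.ofReal r * ‖deriv A t‖ₑ + ‖deriv B t‖ₑ
  have hA' : Measurable fun t => ‖deriv A t‖ₑ := (measurable_deriv A).enorm
  have hB' : Measurable fun t => ‖deriv B t‖ₑ := (measurable_deriv B).enorm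
  calc ∫⁻ x in Ω, ‖jacobian (layeredMap A B) x i j‖ₑ
      ≤ ∫⁻ x in Ω, (ENNReal.ofReal M + slope (x 1)) := by
        refine lintegral_mono_ae ?_
        filter_upwards [ae_restrict_of_ae (ae_differentiableAt_comp_eval_one hA),
          ae_restrict_of_ae (ae_differentiableAt_comp_eval_one hB), ae_restrict_mem hΩ]
          with x hAx hBx hx
        have hle := (norm_jacobian_layeredMap_apply_le hAx hBx i j).trans
          (add_le_add (hM _) (add_le_add_left
            (mul_le_mul_of_nonneg_right (hr x hx) (norm_nonneg _)) _))
        have hr0 : 0 ≤ r := (norm_nonneg x).trans (hr x hx)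
        have hM0 : 0 ≤ M := (norm_nonneg _).trans (hM 0)
        simp only [slope, ← ofReal_norm]
        rw [← ENNReal.ofReal_mul hr0, ← ENNReal.ofReal_add (by positivity) (by positivity),
          ← ENNReal.ofReal_add hM0 (by positivity)]
        exact ENNReal.ofReal_le_ofReal hle
    _ = ENNReal.ofReal M * volume Ω + ∫⁻ x in Ω, slope (x 1) := by
        rw [lintegral_add_left measurable_const, setLIntegral_const]
    _ ≤ ENNReal.ofReal M * volume Ω + ENNReal.ofReal (2 * r) * ∫⁻ t, slope t := by
        gcongr
        exact setLIntegral_comp_eval_one_le hΩ hr ((hA'.const_mul _).add hB')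
    _ = _ := by
        rw [lintegral_add_left (hA'.const_mul _), lintegral_const_mul _ hA']

end LayeredMap

section LayeredSequence

variable {An : ℕ → ℝ → V2 →L[ℝ] V2} {A : ℝ → V2 →L[ℝ] V2} {Bn : ℕ → ℝ → V2} {B : ℝ → V2}
  {s : Set ℝ} {Ω : Set V2} {u : V2 → V2}

theorem IsBVApprox.isSobolev11On_layeredMap (hA : IsBVApprox s An A) (hB : IsBVApprox s Bn B)
    (hΩo : IsOpen Ω) (hΩb : Bornology.IsBounded Ω) (n : ℕ) :
    IsSobolev11On Ω (layeredMap (An n) (Bn n)) (jacobian (layeredMap (An n) (Bn n))) := by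
  obtain ⟨r, hr⟩ := hΩb.exists_norm_le
  obtain ⟨M, hM⟩ := hA.norm_le
  obtain ⟨K, hK⟩ := hA.lipschitz n
  obtain ⟨L, hL⟩ := hB.lipschitz n
  exact isSobolev11On_of_lipschitzOnWith (lipschitzOnWith_layeredMap hK hL (hM n) hr) hΩo hΩb

theorem IsBVApprox.exists_norm_layeredMap_le (hA : IsBVApprox s An A) (hB : IsBVApprox s Bn B)
    (hΩb : Bornology.IsBounded Ω) :
    ∃ D, ∀ n, ∀ x ∈ Ω, ‖layeredMap (An n) (Bn n) x‖ ≤ D := by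
  obtain ⟨r, hr⟩ := hΩb.exists_norm_le
  obtain ⟨M, hM⟩ := hA.norm_le
  obtain ⟨N, hN⟩ := hB.norm_le
  exact ⟨M * r + N, fun n x hx => norm_layeredMap_le (hM n) (hN n) (hr x hx)⟩

theorem IsBVApprox.exists_setLIntegral_enorm_jacobian_layeredMap_le (hA : IsBVApprox s An A)
    (hB : IsBVApprox s Bn B) (hΩ : MeasurableSet Ω) (hΩb : Bornology.IsBounded Ω) :
    ∃ C : ℝ≥0∞, C ≠ ⊤ ∧
      ∀ n i j, ∫⁻ x in Ω, ‖jacobian (layeredMap (An n) (Bn n)) x i j‖ₑ ≤ C := by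
  obtain ⟨r, hr⟩ := hΩb.exists_norm_le
  obtain ⟨M, hM⟩ := hA.norm_le
  obtain ⟨V, hV, hVn⟩ := hA.lintegral_deriv_le
  obtain ⟨W, hW, hWn⟩ := hB.lintegral_deriv_le
  refine ⟨ENNReal.ofReal M * volume Ω + ENNReal.ofReal (2 * r) * (ENNReal.ofReal r * V + W),
    by finiteness [(hΩb.measure_lt_top (μ := volume)).ne], fun n i j => ?_⟩
  obtain ⟨K, hK⟩ := hA.lipschitz n
  obtain ⟨L, hL⟩ := hB.lipschitz n
  refine (setLIntegral_enorm_jacobian_layeredMap_le hK hL (hM n) hΩ hr i j).trans ?_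
  gcongr
  exacts [hVn n, hWn n]

theorem IsBVApprox.ae_tendsto_layeredMap (hA : IsBVApprox s An A) (hB : IsBVApprox s Bn B)
    (hΩ : MeasurableSet Ω) (hs : ∀ x ∈ Ω, x 1 ∈ s) :
    ∀ᵐ x ∂volume.restrict Ω,
      Tendsto (fun n => layeredMap (An n) (Bn n) x) atTop (𝓝 (layeredMap A B x)) := by
  have hAB := (Measure.quasiMeasurePreserving_eval (fun _ : Fin 2 => (volume : Measure ℝ)) 1).ae
    (hA.tendsto.and hB.tendsto)
  filter_upwards [ae_restrict_of_ae hAB, ae_restrict_mem hΩ] with x hx hxΩ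
  have hAx := ((ContinuousLinearMap.apply ℝ V2 x).continuous.tendsto _).comp (hx.1 (hs x hxΩ))
  exact hAx.add (hx.2 (hs x hxΩ))

theorem IsBVApprox.l1ConvOn_layeredMap (hA : IsBVApprox s An A) (hB : IsBVApprox s Bn B)
    (hΩo : IsOpen Ω) (hΩb : Bornology.IsBounded Ω) (hs : ∀ x ∈ Ω, x 1 ∈ s)
    (hu : AEStronglyMeasurable u (volume.restrict Ω))
    (huAB : u =ᵐ[volume.restrict Ω] layeredMap A B) :
    L1ConvOn Ω (fun n => layeredMap (An n) (Bn n)) u := by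
  obtain ⟨D, hD⟩ := hA.exists_norm_layeredMap_le hB hΩb
  refine l1ConvOn_of_ae_tendsto hΩo.measurableSet hΩb.measure_lt_top.ne
    (fun n => (hA.isSobolev11On_layeredMap hB hΩo hΩb n).int_u.1) hu hD ?_
  filter_upwards [hA.ae_tendsto_layeredMap hB hΩo.measurableSet hs, huAB] with x hx hux
  rwa [hux]

theorem IsBVApprox.measConv_jacobian_layeredMap {gu gs : V2 → Mat2} {σ : Measure V2}
    (hA : IsBVApprox s An A) (hB : IsBVApprox s Bn B)
    (hΩo : IsOpen Ω) (hΩb : Bornology.IsBounded Ω) (hu : HasBVDerivOn Ω u gu σ gs)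
    (hconv : L1ConvOn Ω (fun n => layeredMap (An n) (Bn n)) u) :
    MeasConv Ω (fun n => jacobian (layeredMap (An n) (Bn n))) gu σ gs := by
  obtain ⟨C, hC, hCn⟩ := hA.exists_setLIntegral_enorm_jacobian_layeredMap_le hB
    hΩo.measurableSet hΩb
  have hsob := hA.isSobolev11On_layeredMap hB hΩo hΩb
  refine measConv_of_L1ConvOn hu hsob hconv (C := C.toReal) fun n i j => ?_
  rw [integral_norm_eq_lintegral_enorm ((hsob n).int_gu i j).1]
  exact ENNReal.toReal_mono hC (hCn n i j)

end LayeredSequence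

section Attainability

variable {Ω : Set V2} {a b lam ε : ℝ} {R : ℝ → Mat2} {ψ : ℝ → V2}

/-- The identification of matrices with continuous endomorphisms of `V2`; it turns the matrix
field `R` into a curve in a normed space, to which the one-dimensional results apply. -/
def matrixCLM : Mat2 ≃ₗ[ℝ] (V2 →L[ℝ] V2) := Matrix.toLin' ≪≫ₗ LinearMap.toContinuousLinearMap

theorem toMatrix'_matrixCLM (M : Mat2) :
    LinearMap.toMatrix' (matrixCLM M : V2 →ₗ[ℝ] V2) = M :=
  LinearMap.toMatrix'_toLin' M

theorem boundedVariationOn_linearMap_comp {α F G : Type*} [LinearOrder α] [NormedAddCommGroup F]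
    [NormedSpace ℝ F] [FiniteDimensional ℝ F] [NormedAddCommGroup G] [NormedSpace ℝ G]
    (L : F →ₗ[ℝ] G) {f : α → F} {s : Set α} (hf : BoundedVariationOn f s) :
    BoundedVariationOn (fun t => L (f t)) s :=
  (LinearMap.toContinuousLinearMap L).lipschitz.comp_boundedVariationOn hf

theorem BVv.boundedVariationOn {s : Set ℝ} (hψ : BVv ψ s) : BoundedVariationOn ψ s :=
  boundedVariationOn_linearMap_comp (EuclideanSpace.equiv (Fin 2) ℝ).toLinearMap hψ

theorem BVm.boundedVariationOn_matrixCLM {s : Set ℝ} (hR : BVm R s) :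
    BoundedVariationOn (fun t => matrixCLM (R t)) s := by
  let L : EuclideanSpace ℝ (Fin 2 × Fin 2) →ₗ[ℝ] (V2 →L[ℝ] V2) :=
    (matrixCLM.toLinearMap ∘ₗ (Matrix.ofLinearEquiv ℝ).toLinearMap) ∘ₗ
      (LinearEquiv.curry ℝ ℝ (Fin 2) (Fin 2)).toLinearMap ∘ₗ
      (EuclideanSpace.equiv (Fin 2 × Fin 2) ℝ).toLinearMap
  have hL (M : Mat2) : L (mToE M) = matrixCLM M := rfl
  simpa only [hL] using boundedVariationOn_linearMap_comp L hR

theorem eval_one_mem_Ioo_of_isOpen (hΩo : IsOpen Ω) (hΩb : Bornology.IsBounded Ω) {x : V2}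
    (hx : x ∈ Ω) : x 1 ∈ Ioo (aOm Ω) (bOm Ω) := by
  have hbdd : Bornology.IsBounded ((fun x : V2 => x 1) '' Ω) :=
    (LipschitzWith.eval (α := fun _ : Fin 2 => ℝ) 1).isBounded_image hΩb
  have hIcc : (fun x : V2 => x 1) '' Ω ⊆ Icc (aOm Ω) (bOm Ω) :=
    subset_Icc_csInf_csSup hbdd.bddBelow hbdd.bddAbove
  rw [← interior_Icc]
  exact interior_maximal hIcc (isOpenMap_eval 1 Ω hΩo) (mem_image_of_mem _ hx)

theorem measurableSet_rigid2 (lam ε : ℝ) : MeasurableSet (rigid2 lam ε) :=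
  measurableSet_le measurable_const
    (measurable_fract.comp (f := fun x : V2 => x 1 / ε) (by fun_prop))

theorem ae_jacobian_layeredMap_layerApprox (hlam : lam ∈ Ioc (0 : ℝ) 1) (hab : a < b)
    (hε : 0 < ε) (hR : BVm R (Ioo a b)) (hψ : BVv ψ (Ioo a b)) :
    ∀ᵐ x ∂volume.restrict (rigid2 lam ε),
      jacobian (layeredMap (layerApprox a b lam ε fun t => matrixCLM (R t))
        (layerApprox a b lam ε ψ)) x = R (layerNode a b ε (⌊ε⁻¹ * x 1⌋ + 1)) := by
  obtain ⟨K, hK⟩ := lipschitzWith_layerApprox hlam hab hε hR.boundedVariationOn_matrixCLM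
  obtain ⟨L, hL⟩ := lipschitzWith_layerApprox hlam hab hε hψ.boundedVariationOn
  filter_upwards [ae_restrict_of_ae (ae_differentiableAt_comp_eval_one hK),
    ae_restrict_of_ae (ae_differentiableAt_comp_eval_one hL),
    ae_restrict_mem (measurableSet_rigid2 lam ε)] with x hAx hBx hx
  have hfract : lam ≤ Int.fract (ε⁻¹ * x 1) := by rwa [← div_eq_inv_mul]
  rw [jacobian_layeredMap_of_deriv_eq_zero hAx hBx
      (deriv_layerApprox_of_le_fract hlam.1 hfract) (deriv_layerApprox_of_le_fract hlam.1 hfract),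
    layerApprox_of_le_fract hlam.1 _ hfract, toMatrix'_matrixCLM]

theorem attainability_layered_BV_general {Ω : Set V2} (hΩo : IsOpen Ω)
    (hΩb : Bornology.IsBounded Ω) {a b : ℝ} (hab : a < b) (hΩab : ∀ x ∈ Ω, x 1 ∈ Ioo a b)
    {lam : ℝ} (hlam : lam ∈ Ioc (0 : ℝ) 1) {ε : ℕ → ℝ} (hε : ∀ n, 0 < ε n)
    (hε0 : Tendsto ε atTop (𝓝 0)) {u : V2 → V2} {gu gs : V2 → Mat2} {σ : Measure V2}
    (hu : HasBVDerivOn Ω u gu σ gs) {R : ℝ → Mat2} {ψ : ℝ → V2} {S : Set Mat2}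
    (hRS : ∀ t ∈ Ioo a b, R t ∈ S) (hR : BVm R (Ioo a b)) (hψ : BVv ψ (Ioo a b))
    (hform : ∀ᵐ x ∂volume.restrict Ω, u x = (R (x 1)).mulVec x + ψ (x 1)) :
    ∃ un : ℕ → V2 → V2, ∃ gn : ℕ → V2 → Mat2,
      (∀ n, IsSobolev11On Ω (un n) (gn n)) ∧
      (∀ n, ∀ᵐ x ∂volume.restrict (Ω ∩ rigid2 lam (ε n)), gn n x ∈ S) ∧
      L1ConvOn Ω un u ∧ MeasConv Ω gn gu σ gs := by
  have hA := isBVApprox_layerApprox hlam hab hε hε0 hR.boundedVariationOn_matrixCLM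
  have hB := isBVApprox_layerApprox hlam hab hε hε0 hψ.boundedVariationOn
  have hconv := hA.l1ConvOn_layeredMap hB hΩo hΩb hΩab hu.int_u.1 hform
  refine ⟨_, _, hA.isSobolev11On_layeredMap hB hΩo hΩb, fun n => ?_, hconv,
    hA.measConv_jacobian_layeredMap hB hΩo hΩb hu hconv⟩
  filter_upwards [ae_restrict_of_ae_restrict_of_subset inter_subset_right
    (ae_jacobian_layeredMap_layerApprox hlam hab (hε n) hR hψ)] with x hx
  rw [hx]
  exact hRS _ (layerNode_mem_Ioo hab (hε n) _)

end Attainability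

/-- Theorem 1.1, second part: attainability.
Every `u ∈ BV(Ω;ℝ²)` of the form `u(x) = R(x₂)x + ψ(x₂)` with `R ∈ BV(a_Ω,b_Ω;SO(2))`,
`ψ ∈ BV(a_Ω,b_Ω;ℝ²)` is the weak* limit in `BV(Ω;ℝ²)` of a sequence
`u_ε ∈ W^{1,1}(Ω;ℝ²)` with `∇u_ε ∈ SO(2)` a.e. in `εY_rig ∩ Ω`. -/
theorem attainability_layered_BV
    (Ω : Set V2) (hΩlip : IsLipschitzDomain Ω) (hΩx1 : X1Connected Ω)
    (lam : ℝ) (hlam : lam ∈ Ioo (0:ℝ) 1)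
    (ε : ℕ → ℝ) (hεpos : ∀ n, 0 < ε n) (hε0 : Tendsto ε atTop (𝓝 0))
    (u : V2 → V2) (gu : V2 → Mat2) (σ : Measure V2) (gs : V2 → Mat2)
    (hu : HasBVDerivOn Ω u gu σ gs)
    (R : ℝ → Mat2) (ψ : ℝ → V2)
    (hRSO2 : ∀ t ∈ Ioo (aOm Ω) (bOm Ω), R t ∈ SO2)
    (hRbv : BVm R (Ioo (aOm Ω) (bOm Ω))) (hψbv : BVv ψ (Ioo (aOm Ω) (bOm Ω)))
    (hform : ∀ᵐ x ∂(volume.restrict Ω), u x = (R (x 1)).mulVec x + ψ (x 1)) :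
    ∃ un : ℕ → V2 → V2, ∃ gn : ℕ → V2 → Mat2,
      (∀ n, IsSobolev11On Ω (un n) (gn n)) ∧
      (∀ n, ∀ᵐ x ∂(volume.restrict (Ω ∩ rigid2 lam (ε n))), gn n x ∈ SO2) ∧
      L1ConvOn Ω un u ∧ MeasConv Ω gn gu σ gs := by
  obtain ⟨hΩo, ⟨x, hx⟩, hΩb, -⟩ := hΩlip
  have hΩab (y : V2) (hy : y ∈ Ω) := eval_one_mem_Ioo_of_isOpen hΩo hΩb hy
  exact attainability_layered_BV_general hΩo hΩb ((hΩab x hx).1.trans (hΩab x hx).2) hΩab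
    (Ioo_subset_Ioc_self hlam) hεpos hε0 hu hRSO2 hRbv hψbv hform

end
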